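/- arXiv:2010.01385 — 2 statements merged into one kernel-verified Lean document; each statement's English description precedes it below -/
import Mathlib

section
/- Let P be a strict-interval algebraic branching program over variables x₁,...,x_n all of whose non-terminal nodes are ascending. Then along every s-to-t path of P the edge labels that are variables appear in strictly increasing order of index, and the polynomial computed by P can be computed by a read-once oblivious ABP of size polynomial in the size of P in which the variables appear in the order x₁, x₂, ..., x_n. Symmetrically, if all non-terminal nodes of P are descending, the variables along every s-to-t path appear in strictly decreasing order of index, and the polynomial computed by P can be computed by a ROABP of size polynomial in the size of P in which the variables appear in the order x_n, x_{n−1}, ..., x₁. -/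
/-- A (layered) algebraic branching program over `F` in variables `x_0, …, x_{n-1}`.
Layer `j` (for `0 ≤ j ≤ m`) has `width j` nodes, numbered `0, …, width j - 1`; layers `0`
and `m` consist of the single nodes `s` and `t`.  `label j u v = some e` means there is an
edge from node `u` of layer `j` to node `v` of layer `j+1` labeled by the constant or
variable `e`, and `label j u v = none` means there is no such edge. -/
structure ABP (F : Type) (n : ℕ) where
  m : ℕ
  width : ℕ → ℕ
  w0 : width 0 = 1
  wm : width m = 1
  label : ℕ → ℕ → ℕ → Option (F ⊕ Fin n)

namespace ABP

variable {F : Type} {n : ℕ}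

/-- The polynomial contributed by one edge label (`none`, i.e. a missing edge, contributes `0`). -/
noncomputable def edgeVal [Field F] : Option (F ⊕ Fin n) → MvPolynomial (Fin n) F
  | none => 0
  | some (Sum.inl c) => MvPolynomial.C c
  | some (Sum.inr i) => MvPolynomial.X i

/-- The polynomial computed by the ABP: the sum over all `s`-to-`t` paths of the product of
the edge labels along the path. -/
noncomputable def eval [Field F] (P : ABP F n) : MvPolynomial (Fin n) F :=
  ∑ π : (∀ i : Fin (P.m + 1), Fin (P.width i)), ∏ k : Fin P.m,
    edgeVal (P.label k (π k.castSucc) (π k.succ))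

/-- The size of an ABP is its number of nodes. -/
def size (P : ABP F n) : ℕ := ∑ i ∈ Finset.range (P.m + 1), P.width i

/-- `π` describes an `s`-to-`t` path: `π j` is the node of layer `j` used by the path. -/
def IsPath (P : ABP F n) (π : ℕ → ℕ) : Prop :=
  π 0 = 0 ∧ π P.m = 0 ∧ (∀ k, k ≤ P.m → π k < P.width k) ∧
    ∀ k, k < P.m → P.label k (π k) (π (k + 1)) ≠ none

/-- Syntactic multilinearity: on every `s`-to-`t` path, each variable appears at most once
as an edge label. -/
def SynMultilinear (P : ABP F n) : Prop :=
  ∀ π : ℕ → ℕ, P.IsPath π → ∀ x : Fin n,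
    {k : ℕ | k < P.m ∧ P.label k (π k) (π (k + 1)) = some (Sum.inr x)}.ncard ≤ 1

/-- The variable `x` appears as a label of an edge leaving layer `j`. -/
def VarInLayer (P : ABP F n) (x : Fin n) (j : ℕ) : Prop :=
  j < P.m ∧ ∃ u v : ℕ, u < P.width j ∧ v < P.width (j + 1) ∧
    P.label j u v = some (Sum.inr x)

/-- Obliviousness: for each layer, at most one variable appears on the edges leaving it. -/
def Oblivious (P : ABP F n) : Prop :=
  ∀ (j : ℕ) (x x' : Fin n), P.VarInLayer x j → P.VarInLayer x' j → x = x'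

/-- Each variable appears in at most one layer. -/
def ReadOnceVars (P : ABP F n) : Prop :=
  ∀ (x : Fin n) (j j' : ℕ), P.VarInLayer x j → P.VarInLayer x j' → j = j'

/-- A read-once oblivious ABP (ROABP): an oblivious syntactically multilinear ABP in which
each variable appears in at most one layer. -/
def IsROABP (P : ABP F n) : Prop :=
  P.Oblivious ∧ P.ReadOnceVars ∧ P.SynMultilinear

end ABP

namespace ABP

variable {F : Type} {n : ℕ}

/-- The variable `x` appears (as an edge label) in the subprogram `[u,v]` of `P`, where `u`
is a node of layer `i` and `v` a node of layer `j`: some `u`-to-`v` path contains an edge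
labeled `x`. -/
def VarInSub (P : ABP F n) (i j u v : ℕ) (x : Fin n) : Prop :=
  ∃ π : ℕ → ℕ, π i = u ∧ π j = v ∧ (∀ k, i ≤ k → k ≤ j → π k < P.width k) ∧
    (∀ k, i ≤ k → k < j → P.label k (π k) (π (k + 1)) ≠ none) ∧
    ∃ k, i ≤ k ∧ k < j ∧ P.label k (π k) (π (k + 1)) = some (Sum.inr x)

end ABP

/-- A strict-interval ABP: a syntactically multilinear ABP in which every subprogram
`[u,v]` (with `u` a node of layer `i`, `v` a node of layer `j`, `i < j ≤ m`) has an
associated nonempty interval `[lo i j u v, hi i j u v]` of variable indices containing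
the indices of all variables appearing in `[u,v]`, and for every pair of consecutive
subprograms `[u,v]` and `[v,w]` the associated intervals are disjoint. -/
structure StrictIntervalABP (F : Type) (n : ℕ) extends ABP F n where
  sm : toABP.SynMultilinear
  lo : ℕ → ℕ → ℕ → ℕ → Fin n
  hi : ℕ → ℕ → ℕ → ℕ → Fin n
  lo_le_hi : ∀ i j u v, i < j → j ≤ m → u < width i → v < width j →
    lo i j u v ≤ hi i j u v
  mem_ival : ∀ i j u v (x : Fin n), i < j → j ≤ m → u < width i → v < width j →
    toABP.VarInSub i j u v x → lo i j u v ≤ x ∧ x ≤ hi i j u v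
  disj : ∀ i j k u v w, i < j → j < k → k ≤ m →
    u < width i → v < width j → w < width k →
    Disjoint (Finset.Icc (lo i j u v) (hi i j u v))
      (Finset.Icc (lo j k v w) (hi j k v w))

namespace StrictIntervalABP

variable {F : Type} {n : ℕ}

/-- The node `v` of layer `i` (with `0 < i < m`) is ascending: `I_{s,v} ⪯ I_{v,t}`. -/
def Ascending (P : StrictIntervalABP F n) (i v : ℕ) : Prop :=
  P.hi 0 i 0 v ≤ P.lo i P.m v 0

/-- The node `v` of layer `i` (with `0 < i < m`) is descending: `I_{v,t} ⪯ I_{s,v}`. -/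
def Descending (P : StrictIntervalABP F n) (i v : ℕ) : Prop :=
  P.hi i P.m v 0 ≤ P.lo 0 i 0 v

end StrictIntervalABP

/-- The variables of `P` appear in the (ascending) order `x_0, x_1, …, x_{n-1}`. -/
def ABP.OrderedAsc {F : Type} {n : ℕ} (P : ABP F n) : Prop :=
  ∀ (x x' : Fin n) (j j' : ℕ), P.VarInLayer x j → P.VarInLayer x' j' → x < x' → j < j'

/-- The variables of `P` appear in the (descending) order `x_{n-1}, …, x_1, x_0`. -/
def ABP.OrderedDesc {F : Type} {n : ℕ} (P : ABP F n) : Prop :=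
  ∀ (x x' : Fin n) (j j' : ℕ), P.VarInLayer x j → P.VarInLayer x' j' → x < x' → j' < j

/-!
Delete every edge that lies on no `s`-`t` path, and let `A` be the matrix, indexed by the nodes,
of the remaining edge labels. The program computes the `(s, t)` entry of the path-sum matrix `M`,
which is characterized by `M = 1 + A * M`. Split `A = A₀ + ∑ x, X x` into its constant edges and
the edges labeled by each variable `x`, and let `C = ∑ k, A₀ ^ k` collect the constant paths.

In a strict-interval program with all nodes ascending, a node separates the indices read before
it from the indices read after it, so variables increase along every `s`-`t` path. As every
surviving edge lies on such a path, `X y * C * X x = 0` unless `y < x`. This makes the product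
`(∏ x, (1 + C * X x)) * C`, taken over the occurring variables in increasing order, a solution of
the equation for `M`. The entries of `C` are constants, and each factor `1 + C * X x` is a block of
a product of two matrices of edge labels, of which only the second reads a variable, namely `x`.
Thus the product is a read-once oblivious program. The descending case is the same for the reversed
order.
-/

theorem sum_prod_mul_eq_sum_of_forall_eq_sum_mul {R : Type*} [CommSemiring R] {m : ℕ}
    {W : Fin (m + 1) → Type*} [∀ i, Fintype (W i)]
    (e : ∀ k : Fin m, W k.castSucc → W k.succ → R) (g : ∀ i, W i → R)
    (hg : ∀ (k : Fin m) (u : W k.castSucc), g k.castSucc u = ∑ v, e k u v * g k.succ v) :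
    ∑ π : (∀ i, W i), (∏ k, e k (π k.castSucc) (π k.succ)) * g (Fin.last m) (π (Fin.last m)) =
      ∑ u, g 0 u := by
  induction m with
  | zero => exact Fintype.sum_equiv (Equiv.piUnique (α := Fin 1) W) _ _ fun π => by simp
  | succ m ih =>
    refine Eq.trans ?_ (ih (W := fun i => W i.castSucc) (fun k => e k.castSucc)
      (fun i => g i.castSucc) fun k u => hg k.castSucc u)
    rw [← Equiv.sum_comp (Fin.snocEquiv W), Fintype.sum_prod_type, Finset.sum_comm]
    refine Finset.sum_congr rfl fun π _ => ?_
    rw [hg (Fin.last m), Finset.mul_sum]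
    refine Finset.sum_congr rfl fun v _ => ?_
    simp only [Fin.prod_univ_castSucc, Fin.snocEquiv_apply, Fin.snoc_castSucc, Fin.succ_last,
      Fin.snoc_last, ← Fin.castSucc_succ, mul_assoc]

theorem prod_one_add_mul_eq_one_add_mul {R ι : Type*} [Ring R] {a c : R} (hc : c = 1 + a * c)
    (x : ι → R) {L : List ι} (hdiag : ∀ i ∈ L, x i * c * x i = 0)
    (hpair : L.Pairwise fun i j => x j * c * x i = 0) :
    (L.map fun i => 1 + c * x i).prod * c =
      1 + (a + (L.map x).sum) * ((L.map fun i => 1 + c * x i).prod * c) := by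
  induction L with
  | nil => simpa using hc
  | cons i L ih =>
    obtain ⟨hi, hL⟩ := List.forall_mem_cons.mp hdiag
    obtain ⟨hiL, hpairL⟩ := List.pairwise_cons.mp hpair
    have htail : (L.map x).sum * c * x i = 0 := by
      rw [mul_assoc, ← List.sum_map_mul_right]
      refine List.sum_eq_zero fun y hy => ?_
      obtain ⟨j, hj, rfl⟩ := List.mem_map.mp hy
      rw [← mul_assoc, hiL j hj]
    specialize ih hL hpairL
    simp only [List.map_cons, List.prod_cons, List.sum_cons]
    set M := (L.map fun i => 1 + c * x i).prod * c
    set S := (L.map x).sum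
    calc (1 + c * x i) * (L.map fun i => 1 + c * x i).prod * c
        = M + c * x i * M := by rw [mul_assoc, add_mul, one_mul]
      _ = 1 + (a + S) * M + (1 + a * c) * x i * M := by rw [← ih, ← hc]
      _ = 1 + (a + S) * M + (1 + a * c) * x i * M + x i * c * x i * M + S * c * x i * M := by
        rw [hi, htail, zero_mul, add_zero, add_zero]
      _ = 1 + (a + (x i + S)) * ((1 + c * x i) * M) := by noncomm_ring
      _ = _ := by rw [mul_assoc]

theorem of_matrix_pow_apply_ne_zero {R V : Type*} [Semiring R] [Fintype V] [DecidableEq V]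
    {A : Matrix V V R} {p : ℕ → V → Prop}
    (hstep : ∀ i a b, p i a → A a b ≠ 0 → p (i + 1) b) {a : V} (h₀ : p 0 a) {k : ℕ} {b : V}
    (hk : (A ^ k) a b ≠ 0) : p k b := by
  induction k generalizing b with
  | zero =>
    obtain rfl : a = b := by
      by_contra hab
      exact hk (by rw [pow_zero, Matrix.one_apply_ne hab])
    exact h₀
  | succ k ih =>
    rw [pow_succ, Matrix.mul_apply] at hk
    obtain ⟨c, -, hc⟩ := Finset.exists_ne_zero_of_sum_ne_zero hk
    exact hstep k c b (ih (left_ne_zero_of_mul hc)) (right_ne_zero_of_mul hc)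

theorem exists_list_pairwise_toFinset_eq {α : Type*} [DecidableEq α] (r : α → α → Prop)
    [IsStrictTotalOrder α r] (S : Finset α) :
    ∃ L : List α, L.Pairwise r ∧ L.length = S.card ∧ L.toFinset = S := by
  classical
  let : LinearOrder α := linearOrderOfSTO r
  exact ⟨S.sort, S.sortedLT_sort.pairwise, S.length_sort _, S.sort_toFinset _⟩

namespace ABP

variable {F : Type} {n : ℕ}

section Nodes

variable (P : ABP F n)

/-- The nodes of a program, as a type: pairs of a layer and a node in it. -/
abbrev Node : Type := Σ j : Fin (P.m + 1), Fin (P.width j)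

/-- The node `s`. -/
def source : P.Node := ⟨0, 0, by simp [P.w0]⟩

/-- The node `t`. -/
def sink : P.Node := ⟨Fin.last _, 0, by simp [P.wm]⟩

/-- The edge labels of all layers of `P`, as one matrix indexed by the nodes of `P`. -/
def nodeLabel : Matrix P.Node P.Node (Option (F ⊕ Fin n)) :=
  fun a b => if (b.1 : ℕ) = a.1 + 1 then P.label a.1 a.2 b.2 else none

theorem card_node : Fintype.card P.Node = P.size := by
  simp [ABP.size, Finset.sum_range]

variable {P}

theorem layer_eq_of_nodeLabel_ne_none {a b : P.Node} (h : P.nodeLabel a b ≠ none) :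
    (b.1 : ℕ) = a.1 + 1 := by
  by_contra hab
  exact h (if_neg hab)

theorem label_eq_nodeLabel {a b : P.Node} (h : P.nodeLabel a b ≠ none) :
    P.label a.1 a.2 b.2 = P.nodeLabel a b :=
  (if_pos (layer_eq_of_nodeLabel_ne_none h)).symm

theorem two_le_size (hm : P.m ≠ 0) : 2 ≤ P.size := by
  rw [size, Finset.sum_range_succ, P.wm]
  have hfirst : P.width 0 ≤ ∑ i ∈ Finset.range P.m, P.width i :=
    Finset.single_le_sum (fun _ _ => Nat.zero_le _) (Finset.mem_range.2 (Nat.pos_of_ne_zero hm))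
  rw [P.w0] at hfirst
  lia

end Nodes

section Eval

variable [Field F] (P : ABP F n)

theorem eval_eq_of_forall_eq_sum (g : P.Node → MvPolynomial (Fin n) F) (ht : g P.sink = 1)
    (hg : ∀ (k : Fin P.m) (u : Fin (P.width k.castSucc)),
      g ⟨k.castSucc, u⟩ = ∑ v : Fin (P.width k.succ), edgeVal (P.label k u v) * g ⟨k.succ, v⟩) :
    P.eval = g P.source := by
  let : Unique (Fin (P.width (0 : Fin (P.m + 1)))) :=
    ⟨⟨P.source.2⟩, fun u => Fin.ext (Nat.lt_one_iff.1 (u.2.trans_eq P.w0))⟩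
  have hlast (u : Fin (P.width (Fin.last P.m))) : g ⟨Fin.last P.m, u⟩ = 1 := by
    obtain rfl : u = P.sink.2 := Fin.ext (Nat.lt_one_iff.1 (u.2.trans_eq P.wm))
    exact ht
  have hsum := sum_prod_mul_eq_sum_of_forall_eq_sum_mul
    (W := fun i : Fin (P.m + 1) => Fin (P.width i))
    (fun k u v => edgeVal (P.label k u v)) (fun i u => g ⟨i, u⟩) hg
  simp only [hlast, mul_one, Fintype.sum_unique] at hsum
  exact hsum

theorem eval_eq_of_eq_one_add_mul {M : Matrix P.Node P.Node (MvPolynomial (Fin n) F)}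
    (hM : M = 1 + P.nodeLabel.map edgeVal * M) : P.eval = M P.source P.sink := by
  have hrec (a : P.Node) : M a P.sink = (1 : Matrix P.Node P.Node _) a P.sink +
      ∑ b, edgeVal (P.nodeLabel a b) * M b P.sink := congrFun₂ hM a P.sink
  have hzero {a b : P.Node} (hab : (b.1 : ℕ) ≠ a.1 + 1) :
      edgeVal (P.nodeLabel a b) * M b P.sink = 0 := by
    rw [nodeLabel, if_neg hab, edgeVal, zero_mul]
  refine P.eval_eq_of_forall_eq_sum (fun a => M a P.sink) ?_ fun k u => ?_
  · have hout (b : P.Node) : (b.1 : ℕ) ≠ P.sink.1 + 1 := b.1.isLt.ne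
    rw [hrec, Matrix.one_apply_eq, Finset.sum_eq_zero fun b _ => hzero (hout b), add_zero]
  · have hne : (⟨k.castSucc, u⟩ : P.Node) ≠ P.sink :=
      fun h => k.castSucc_lt_last.ne (congrArg Sigma.fst h)
    rw [hrec, Matrix.one_apply_ne hne, zero_add, Fintype.sum_sigma,
      Fintype.sum_eq_single k.succ fun j hj =>
        Finset.sum_eq_zero fun v _ => hzero fun h => hj (Fin.ext h)]
    exact Finset.sum_congr rfl fun v _ => by simp [nodeLabel]

end Eval

section Order

/-- Along every `s`-`t` path of `P` the variables are strictly increasing for `r`. -/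
def PathOrdered (P : ABP F n) (r : Fin n → Fin n → Prop) : Prop :=
  ∀ π : ℕ → ℕ, P.IsPath π → ∀ (k k' : ℕ) (x x' : Fin n), k < k' → k' < P.m →
    P.label k (π k) (π (k + 1)) = some (Sum.inr x) →
    P.label k' (π k') (π (k' + 1)) = some (Sum.inr x') → r x x'

/-- The layers of `P` read the variables in increasing order for `r`. Taking `r` to be `<` gives
`ABP.OrderedAsc`, and taking it to be `>` gives `ABP.OrderedDesc`. -/
def OrderedBy (P : ABP F n) (r : Fin n → Fin n → Prop) : Prop :=
  ∀ (x x' : Fin n) (j j' : ℕ), P.VarInLayer x j → P.VarInLayer x' j' → r x x' → j < j'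

variable {P : ABP F n}

theorem ReadOnceVars.synMultilinear (h : P.ReadOnceVars) : P.SynMultilinear := by
  rintro π ⟨-, -, hwidth, -⟩ x
  have hlayer {k : ℕ} (hk : k < P.m ∧ P.label k (π k) (π (k + 1)) = some (Sum.inr x)) :
      P.VarInLayer x k :=
    ⟨hk.1, π k, π (k + 1), hwidth k hk.1.le, hwidth (k + 1) hk.1, hk.2⟩
  refine (Set.ncard_le_one ((Set.finite_lt_nat P.m).subset fun k hk => hk.1)).2 ?_
  exact fun k hk k' hk' => h x k k' (hlayer hk) (hlayer hk')

variable {r : Fin n → Fin n → Prop}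

theorem Oblivious.isROABP [Std.Irrefl r] (hob : P.Oblivious) (hlt : ∀ (x x' : Fin n) (j j' : ℕ),
    P.VarInLayer x j → P.VarInLayer x' j' → j < j' → r x x') : P.IsROABP := by
  have hread : P.ReadOnceVars := by
    intro x j j' h h'
    rcases lt_trichotomy j j' with hjj' | hjj' | hjj'
    · exact absurd (hlt x x j j' h h' hjj') (irrefl x)
    · exact hjj'
    · exact absurd (hlt x x j' j h' h hjj') (irrefl x)
  exact ⟨hob, hread, hread.synMultilinear⟩

theorem Oblivious.orderedBy [Std.Asymm r] (hob : P.Oblivious) (hlt : ∀ (x x' : Fin n) (j j' : ℕ),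
    P.VarInLayer x j → P.VarInLayer x' j' → j < j' → r x x') : P.OrderedBy r := by
  intro x x' j j' h h' hr
  rcases lt_trichotomy j j' with hjj' | rfl | hjj'
  · exact hjj'
  · obtain rfl := hob j x x' h h'
    exact absurd hr (irrefl x)
  · exact absurd (hlt x' x j' j h' h hjj') (asymm hr)

end Order

section Trim

variable {P : ABP F n}

theorem IsPath.splice {π ρ : ℕ → ℕ} (hπ : P.IsPath π) (hρ : P.IsPath ρ) {i : ℕ}
    (hi : π i = ρ i) : P.IsPath fun k => if k ≤ i then π k else ρ k := by
  obtain ⟨hπs, hπt, hπw, hπe⟩ := hπ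
  obtain ⟨-, hρt, hρw, hρe⟩ := hρ
  refine ⟨by simpa using hπs, by grind, by grind, fun k hk => ?_⟩
  rcases lt_trichotomy k i with hki | rfl | hki
  · simpa [hki.le, Nat.succ_le_of_lt hki] using hπe k hk
  · simpa [hi] using hρe k hk
  · simpa [hki.not_ge, (hki.trans k.lt_succ_self).not_ge] using hρe k hk

theorem exists_isPath_of_forall_label_ne_none (π : ∀ i : Fin (P.m + 1), Fin (P.width i))
    (h : ∀ k : Fin P.m, P.label k (π k.castSucc) (π k.succ) ≠ none) :
    ∃ ρ : ℕ → ℕ, P.IsPath ρ ∧ ∀ i : Fin (P.m + 1), ρ i = π i := by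
  let ρ (k : ℕ) : ℕ := if hk : k < P.m + 1 then π ⟨k, hk⟩ else 0
  have hρ (i : Fin (P.m + 1)) : ρ i = π i := dif_pos i.2
  have hwidth (k : ℕ) (hk : k ≤ P.m) : ρ k < P.width k := by
    rw [hρ ⟨k, Nat.lt_succ_of_le hk⟩]
    exact (π _).2
  refine ⟨ρ, ⟨?_, ?_, hwidth, fun k hk => ?_⟩, hρ⟩
  · exact Nat.lt_one_iff.1 ((hwidth 0 (Nat.zero_le _)).trans_eq P.w0)
  · exact Nat.lt_one_iff.1 ((hwidth P.m le_rfl).trans_eq P.wm)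
  · have hedge := h ⟨k, hk⟩
    rwa [← hρ, ← hρ] at hedge

/-- Every edge of `P` lies on an `s`-`t` path. -/
def IsTrim (P : ABP F n) : Prop :=
  ∀ k u v, P.label k u v ≠ none → ∃ π, P.IsPath π ∧ π k = u ∧ π (k + 1) = v

open Classical in
/-- The program obtained from `P` by deleting the edges that lie on no `s`-`t` path. -/
noncomputable def trim (P : ABP F n) : ABP F n where
  __ := P
  label k u v := if ∃ π, P.IsPath π ∧ π k = u ∧ π (k + 1) = v then P.label k u v else none

theorem IsPath.trim_label {π : ℕ → ℕ} (hπ : P.IsPath π) (k : ℕ) :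
    P.trim.label k (π k) (π (k + 1)) = P.label k (π k) (π (k + 1)) :=
  if_pos ⟨π, hπ, rfl, rfl⟩

theorem isPath_trim_iff {π : ℕ → ℕ} : P.trim.IsPath π ↔ P.IsPath π := by
  refine ⟨fun ⟨hs, ht, hwidth, hedge⟩ => ⟨hs, ht, hwidth, fun k hk hnone => hedge k hk ?_⟩,
    fun hπ => ⟨hπ.1, hπ.2.1, hπ.2.2.1, fun k hk => ?_⟩⟩
  · simp [trim, hnone]
  · rw [hπ.trim_label]
    exact hπ.2.2.2 k hk

variable (P) in
theorem isTrim_trim : P.trim.IsTrim := by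
  intro k u v h
  simp only [isPath_trim_iff]
  by_contra hpath
  exact h (if_neg hpath)

theorem PathOrdered.trim {r : Fin n → Fin n → Prop} (h : P.PathOrdered r) :
    P.trim.PathOrdered r := by
  intro π hπ k k' x x' hkk' hk' hx hx'
  rw [isPath_trim_iff] at hπ
  rw [hπ.trim_label] at hx hx'
  exact h π hπ k k' x x' hkk' hk' hx hx'

variable (P) in
theorem eval_trim [Field F] : P.trim.eval = P.eval := by
  refine Finset.sum_congr rfl fun (π : ∀ i : Fin (P.m + 1), Fin (P.width i)) _ => ?_
  by_cases h : ∀ k : Fin P.m, P.label k (π k.castSucc) (π k.succ) ≠ none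
  · obtain ⟨ρ, hρ, hρπ⟩ := exists_isPath_of_forall_label_ne_none π h
    refine Finset.prod_congr rfl fun (k : Fin P.m) _ => ?_
    have hlabel : P.trim.label k (ρ k.castSucc) (ρ k.succ) = P.label k (ρ k.castSucc) (ρ k.succ) :=
      hρ.trim_label k
    rw [hρπ, hρπ] at hlabel
    exact congrArg edgeVal hlabel
  · push Not at h
    obtain ⟨k, hk⟩ := h
    exact (Finset.prod_eq_zero (i := k) (Finset.mem_univ _) (by simp [ABP.trim, hk, edgeVal])).trans
      (Finset.prod_eq_zero (i := k) (Finset.mem_univ _) (by simp [hk, edgeVal])).symm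

/-- Some `s`-`t` path through the node `u` of layer `k` reads `y` before it reaches `u`. -/
def VarBefore (P : ABP F n) (y : Fin n) (k u : ℕ) : Prop :=
  ∃ π, P.IsPath π ∧ π k = u ∧ ∃ i < k, P.label i (π i) (π (i + 1)) = some (Sum.inr y)

variable {y : Fin n} {k u v : ℕ}

theorem IsTrim.varBefore_of_label_eq (hP : P.IsTrim) (h : P.label k u v = some (Sum.inr y)) :
    P.VarBefore y (k + 1) v := by
  obtain ⟨π, hπ, rfl, rfl⟩ := hP k u v (by simp [h])
  exact ⟨π, hπ, rfl, k, k.lt_succ_self, h⟩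

theorem VarBefore.exists_isPath_through_edge (hy : P.VarBefore y k u) (hP : P.IsTrim)
    (h : P.label k u v ≠ none) :
    ∃ π, P.IsPath π ∧ π k = u ∧ π (k + 1) = v ∧
      ∃ i < k, P.label i (π i) (π (i + 1)) = some (Sum.inr y) := by
  obtain ⟨π, hπ, hπk, i, hik, hi⟩ := hy
  obtain ⟨ρ, hρ, hρk, hρv⟩ := hP k u v h
  refine ⟨_, hπ.splice hρ (hπk.trans hρk.symm), by simpa using hπk, by simpa using hρv, i, hik, ?_⟩
  simpa [hik.le, Nat.succ_le_of_lt hik] using hi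

theorem VarBefore.succ (hy : P.VarBefore y k u) (hP : P.IsTrim) (h : P.label k u v ≠ none) :
    P.VarBefore y (k + 1) v := by
  obtain ⟨π, hπ, -, hπv, i, hik, hi⟩ := hy.exists_isPath_through_edge hP h
  exact ⟨π, hπ, hπv, i, hik.trans k.lt_succ_self, hi⟩

theorem VarBefore.rel {r : Fin n → Fin n → Prop} {x : Fin n} (hy : P.VarBefore y k u)
    (hP : P.IsTrim) (hr : P.PathOrdered r) (hk : k < P.m)
    (h : P.label k u v = some (Sum.inr x)) : r y x := by
  have hedge : P.label k u v ≠ none := by simp [h]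
  obtain ⟨π, hπ, rfl, rfl, i, hik, hi⟩ := hy.exists_isPath_through_edge hP hedge
  exact hr π hπ i k y x hik hk hi h

end Trim

section OfLayers

variable {V : Type*} [Fintype V]

/-- The element of `V` that node `u` of layer `j` of `ABP.ofLayers` stands for, if that program
has `K` layers of edges: `s` in layer `0`, `t` in layer `K`, and the `u`-th element of `V` in
between (the value `s` for `u` out of range is junk). -/
noncomputable def stateAt (K : ℕ) (s t : V) (j u : ℕ) : V :=
  if j = 0 then s else if j = K then t else
    if hu : u < Fintype.card V then (Fintype.equivFin V).symm ⟨u, hu⟩ else s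

/-- The program whose `j`-th layer of edges is labeled by the `j`-th matrix of the list `ℓ`, with
node set `V` in each inner layer, source `s` and sink `t`. -/
noncomputable def ofLayers (ℓ : List (Matrix V V (Option (F ⊕ Fin n)))) (s t : V) : ABP F n where
  m := ℓ.length
  width j := if j = 0 ∨ j = ℓ.length then 1 else Fintype.card V
  w0 := by simp
  wm := by simp
  label j u v := if hj : j < ℓ.length then
    ℓ[j] (stateAt ℓ.length s t j u) (stateAt ℓ.length s t (j + 1) v) else none

variable (ℓ : List (Matrix V V (Option (F ⊕ Fin n)))) (s t : V)

theorem size_ofLayers_le : (ofLayers ℓ s t).size ≤ (ℓ.length + 1) * Fintype.card V := by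
  have hV : 1 ≤ Fintype.card V := Fintype.card_pos_iff.2 ⟨s⟩
  have hwidth (j : ℕ) : (ofLayers ℓ s t).width j ≤ Fintype.card V := by
    simp only [ofLayers]
    split_ifs
    · exact hV
    · exact le_rfl
  exact (Finset.sum_le_card_nsmul _ _ _ fun j _ => hwidth j).trans_eq (by simp [ofLayers])

variable {ℓ s t}

theorem sum_stateAt_of_ne {M : Type*} [AddCommMonoid M] {j : ℕ} (h₀ : j ≠ 0) (hj : j ≠ ℓ.length)
    (f : V → M) :
    ∑ u : Fin ((ofLayers ℓ s t).width j), f (stateAt ℓ.length s t j u) = ∑ a, f a := by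
  have hwidth : (ofLayers ℓ s t).width j = Fintype.card V := by simp [ofLayers, h₀, hj]
  exact Fintype.sum_equiv ((finCongr hwidth).trans (Fintype.equivFin V).symm) _ _ fun u => by
    rw [stateAt, if_neg h₀, if_neg hj, dif_pos (u.2.trans_eq hwidth)]
    rfl

theorem sum_stateAt_length {M : Type*} [AddCommMonoid M] (hℓ : ℓ.length ≠ 0) (f : V → M) :
    ∑ u : Fin ((ofLayers ℓ s t).width ℓ.length), f (stateAt ℓ.length s t ℓ.length u) = f t := by
  have hwidth : (ofLayers ℓ s t).width ℓ.length = 1 := (ofLayers ℓ s t).wm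
  simp only [stateAt, hℓ, if_false, if_true, Finset.sum_const, Finset.card_univ, Fintype.card_fin,
    hwidth, one_smul]

/-- The product of a list of matrices of edge labels, read as matrices of polynomials. -/
noncomputable def labelProd [Field F] [DecidableEq V]
    (ℓ : List (Matrix V V (Option (F ⊕ Fin n)))) : Matrix V V (MvPolynomial (Fin n) F) :=
  (ℓ.map fun A => A.map edgeVal).prod

theorem sum_stateAt_mul_labelProd_drop [Field F] [DecidableEq V] {j : ℕ} (h₀ : j ≠ 0)
    (hj : j ≤ ℓ.length) (f : V → MvPolynomial (Fin n) F) :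
    ∑ u : Fin ((ofLayers ℓ s t).width j),
        f (stateAt ℓ.length s t j u) * labelProd (ℓ.drop j) (stateAt ℓ.length s t j u) t =
      ∑ b, f b * labelProd (ℓ.drop j) b t := by
  rcases hj.eq_or_lt with rfl | hlt
  · rw [sum_stateAt_length h₀ fun b => f b * labelProd (ℓ.drop ℓ.length) b t]
    simp [labelProd, Matrix.one_apply]
  · exact sum_stateAt_of_ne h₀ hlt.ne fun b => f b * labelProd (ℓ.drop j) b t

theorem eval_ofLayers [Field F] [DecidableEq V] (hℓ : ℓ.length ≠ 0) :
    (ofLayers ℓ s t).eval = labelProd ℓ s t := by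
  refine (eval_eq_of_forall_eq_sum (ofLayers ℓ s t)
    (fun a => labelProd (ℓ.drop a.1) (stateAt ℓ.length s t a.1 a.2) t) ?_ ?_).trans ?_
  · simp [sink, ofLayers, stateAt, hℓ, labelProd]
  · intro k u
    have hk : (k : ℕ) < ℓ.length := k.2
    have hlabel (v : ℕ) : (ofLayers ℓ s t).label k u v =
        ℓ[(k : ℕ)] (stateAt ℓ.length s t k u) (stateAt ℓ.length s t (k + 1) v) := dif_pos hk
    simp only [hlabel]
    refine Eq.trans ?_ (sum_stateAt_mul_labelProd_drop (Nat.succ_ne_zero k) hk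
      fun b => edgeVal (ℓ[(k : ℕ)] (stateAt ℓ.length s t k u) b)).symm
    simp only [labelProd, Fin.val_castSucc, List.drop_eq_getElem_cons hk, List.map_cons,
      List.prod_cons, Matrix.mul_apply, Matrix.map_apply]
  · simp [source, stateAt]

/-- The variable `x` occurs as an entry of the matrix of edge labels `A`. -/
def HasVar (A : Matrix V V (Option (F ⊕ Fin n))) (x : Fin n) : Prop :=
  ∃ a b, A a b = some (Sum.inr x)

theorem hasVar_of_varInLayer_ofLayers {x : Fin n} {j : ℕ}
    (h : (ofLayers ℓ s t).VarInLayer x j) : ∃ hj : j < ℓ.length, HasVar ℓ[j] x := by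
  obtain ⟨hj, u, v, -, -, hx⟩ := h
  exact ⟨hj, _, _, (dif_pos hj).symm.trans hx⟩

theorem oblivious_ofLayers (h : ∀ A ∈ ℓ, ∀ x y, HasVar A x → HasVar A y → x = y) :
    (ofLayers ℓ s t).Oblivious := by
  intro j x y hx hy
  obtain ⟨hj, hx⟩ := hasVar_of_varInLayer_ofLayers hx
  obtain ⟨_, hy⟩ := hasVar_of_varInLayer_ofLayers hy
  exact h _ (List.getElem_mem hj) x y hx hy

theorem rel_of_varInLayer_ofLayers {r : Fin n → Fin n → Prop}
    (h : ℓ.Pairwise fun A B => ∀ x y, HasVar A x → HasVar B y → r x y) (x y : Fin n) (j j' : ℕ)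
    (hx : (ofLayers ℓ s t).VarInLayer x j) (hy : (ofLayers ℓ s t).VarInLayer y j')
    (hjj' : j < j') : r x y := by
  obtain ⟨hj, hx⟩ := hasVar_of_varInLayer_ofLayers hx
  obtain ⟨hj', hy⟩ := hasVar_of_varInLayer_ofLayers hy
  exact List.pairwise_iff_getElem.1 h j j' hj hj' hjj' x y hx hy

end OfLayers

section Sweep

variable {V : Type*}

/-- The matrix of edge labels whose entries are the constants in `A`. -/
def constLabels (A : Matrix V V F) : Matrix V V (Option (F ⊕ Fin n)) :=
  A.map fun c => some (Sum.inl c)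

open Classical in
/-- The part of the matrix of edge labels `A` that is labeled by `x`. -/
noncomputable def varLabels (A : Matrix V V (Option (F ⊕ Fin n))) (x : Fin n) :
    Matrix V V (Option (F ⊕ Fin n)) :=
  A.map fun e => if e = some (Sum.inr x) then e else none

theorem not_hasVar_constLabels (A : Matrix V V F) (x : Fin n) : ¬HasVar (constLabels A) x := by
  rintro ⟨a, b, h⟩
  simp [constLabels] at h

variable [Field F]

theorem constLabels_map_edgeVal (B : Matrix V V F) :
    (constLabels (n := n) B).map edgeVal = B.map MvPolynomial.C := rfl

variable [DecidableEq V]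

/-- The labels of the edges of `A` labeled by `x`, from a second copy of the nodes to the first,
while the first copy is passed through unchanged. -/
noncomputable def readLabels (A : Matrix V V (Option (F ⊕ Fin n))) (x : Fin n) :
    Matrix (V ⊕ V) (V ⊕ V) (Option (F ⊕ Fin n)) :=
  Matrix.fromBlocks (constLabels 1) (constLabels 0) (varLabels A x) (constLabels 0)

/-- The layers of the read-once program computing `(∏ x ∈ L, (1 + C * X x)) * C`, where `X x` is
the matrix of the edges of `A` labeled by `x`. The node set is doubled, so that `1 + C * X x` is
the upper left block of the product of the block matrices `(1, C; 0, 0)` and `(1, 0; X x, 0)`. -/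
noncomputable def sweepLayers (C : Matrix V V F) (A : Matrix V V (Option (F ⊕ Fin n))) :
    List (Fin n) → List (Matrix (V ⊕ V) (V ⊕ V) (Option (F ⊕ Fin n)))
  | [] => [constLabels (Matrix.fromBlocks C 0 0 0)]
  | x :: L => constLabels (Matrix.fromBlocks 1 C 0 0) :: readLabels A x :: sweepLayers C A L

variable {C : Matrix V V F} {A : Matrix V V (Option (F ⊕ Fin n))}

variable (C A) in
theorem length_sweepLayers (L : List (Fin n)) :
    (sweepLayers C A L).length = 2 * L.length + 1 := by
  induction L with
  | nil => rfl
  | cons x L ih => simp only [sweepLayers, List.length_cons, ih]; ring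

theorem eq_of_hasVar_readLabels {x y : Fin n} (h : HasVar (readLabels A x) y) : y = x := by
  obtain ⟨a | a, b | b, hab⟩ := h
  · exact absurd ⟨a, b, hab⟩ (not_hasVar_constLabels (1 : Matrix V V F) y)
  · exact absurd ⟨a, b, hab⟩ (not_hasVar_constLabels (0 : Matrix V V F) y)
  · by_cases hx : A a b = some (Sum.inr x)
    · simpa [readLabels, varLabels, hx] using hab.symm
    · simp [readLabels, varLabels, hx] at hab
  · exact absurd ⟨a, b, hab⟩ (not_hasVar_constLabels (0 : Matrix V V F) y)

theorem mem_of_hasVar_sweepLayers {L : List (Fin n)}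
    {B : Matrix (V ⊕ V) (V ⊕ V) (Option (F ⊕ Fin n))} (hB : B ∈ sweepLayers C A L) {y : Fin n}
    (hy : HasVar B y) : y ∈ L := by
  induction L with
  | nil =>
    obtain rfl := List.mem_singleton.1 hB
    exact absurd hy (not_hasVar_constLabels _ y)
  | cons x L ih =>
    rcases List.mem_cons.1 hB with rfl | hB
    · exact absurd hy (not_hasVar_constLabels _ y)
    rcases List.mem_cons.1 hB with rfl | hB
    · exact eq_of_hasVar_readLabels hy ▸ List.mem_cons_self
    · exact List.mem_cons_of_mem x (ih hB)

theorem eq_of_hasVar_sweepLayers {L : List (Fin n)}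
    {B : Matrix (V ⊕ V) (V ⊕ V) (Option (F ⊕ Fin n))} (hB : B ∈ sweepLayers C A L) {y z : Fin n}
    (hy : HasVar B y) (hz : HasVar B z) : y = z := by
  induction L with
  | nil =>
    obtain rfl := List.mem_singleton.1 hB
    exact absurd hy (not_hasVar_constLabels _ y)
  | cons x L ih =>
    rcases List.mem_cons.1 hB with rfl | hB
    · exact absurd hy (not_hasVar_constLabels _ y)
    rcases List.mem_cons.1 hB with rfl | hB
    · exact (eq_of_hasVar_readLabels hy).trans (eq_of_hasVar_readLabels hz).symm
    · exact ih hB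

variable (C A) in
theorem pairwise_sweepLayers {r : Fin n → Fin n → Prop} {L : List (Fin n)} (hL : L.Pairwise r) :
    (sweepLayers C A L).Pairwise fun B B' => ∀ x y, HasVar B x → HasVar B' y → r x y := by
  induction hL with
  | nil => exact List.pairwise_singleton _ _
  | cons hx _ ih =>
    refine .cons (fun B _ y z hy => absurd hy (not_hasVar_constLabels _ y)) (.cons ?_ ih)
    intro B hB y z hy hz
    obtain rfl := eq_of_hasVar_readLabels hy
    exact hx z (mem_of_hasVar_sweepLayers hB hz)

variable [Fintype V]

variable (C A) in
theorem labelProd_sweepLayers (L : List (Fin n)) :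
    labelProd (sweepLayers C A L) = Matrix.fromBlocks
      ((L.map fun x => 1 + C.map MvPolynomial.C * (varLabels A x).map edgeVal).prod *
        C.map MvPolynomial.C) 0 0 0 := by
  induction L with
  | nil =>
    simp [labelProd, sweepLayers, constLabels_map_edgeVal, Matrix.fromBlocks_map]
  | cons x L ih =>
    rw [labelProd] at ih
    simp [labelProd, sweepLayers, readLabels, ih, constLabels_map_edgeVal, Matrix.fromBlocks_map,
      Matrix.fromBlocks_multiply, Matrix.map_one _ (map_zero _) (map_one _), add_mul, mul_assoc]

end Sweep

section PathSums

variable [Field F]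

/-- The constant carried by an edge label, with value `0` on variables and missing edges. -/
def constPart : Option (F ⊕ Fin n) → F
  | some (Sum.inl c) => c
  | _ => 0

theorem edgeVal_eq_constPart_add_sum [DecidableEq (Option (F ⊕ Fin n))] {S : Finset (Fin n)}
    {e : Option (F ⊕ Fin n)} (h : ∀ x, e = some (Sum.inr x) → x ∈ S) :
    edgeVal e = MvPolynomial.C (constPart e) +
      ∑ x ∈ S, if e = some (Sum.inr x) then MvPolynomial.X x else 0 := by
  rcases e with _ | c | y
  · simp [edgeVal, constPart]
  · simp [edgeVal, constPart]
  · simp [edgeVal, constPart, h y rfl]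

variable {V : Type*} {A : Matrix V V (Option (F ⊕ Fin n))}

open Classical in
theorem varLabels_map_edgeVal_apply {x : Fin n} {a b : V} :
    (varLabels A x).map edgeVal a b =
      if A a b = some (Sum.inr x) then MvPolynomial.X x else 0 := by
  by_cases hx : A a b = some (Sum.inr x) <;> simp [varLabels, hx, edgeVal]

theorem eq_of_varLabels_map_edgeVal_ne_zero {x : Fin n} {a b : V}
    (h : (varLabels A x).map edgeVal a b ≠ 0) : A a b = some (Sum.inr x) := by
  by_contra hx
  exact h (by rw [varLabels_map_edgeVal_apply, if_neg hx])

theorem map_edgeVal_eq_add_sum_varLabels {L : List (Fin n)} (hL : L.Nodup)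
    (hA : ∀ x, HasVar A x → x ∈ L) :
    A.map edgeVal = (A.map constPart).map MvPolynomial.C +
      (L.map fun x => (varLabels A x).map edgeVal).sum := by
  classical
  rw [← List.sum_toFinset _ hL]
  ext1 a b
  simp only [Matrix.add_apply, Matrix.sum_apply, varLabels_map_edgeVal_apply]
  exact edgeVal_eq_constPart_add_sum fun x hx => List.mem_toFinset.2 (hA x ⟨a, b, hx⟩)

variable (P : ABP F n)

/-- The entry at `(a, b)` is the sum over all `a`-`b` paths of constant edges of the product of the
constants along the path. -/
noncomputable def constClosure : Matrix P.Node P.Node F :=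
  ∑ k ∈ Finset.range (P.m + 1), P.nodeLabel.map constPart ^ k

variable {P}

theorem nodeLabel_ne_none_of_constPart_ne_zero {a b : P.Node}
    (h : P.nodeLabel.map constPart a b ≠ 0) : P.nodeLabel a b ≠ none :=
  fun hnone => h (by simp [hnone, constPart])

variable (P) in
theorem nodeLabel_constPart_pow_eq_zero : P.nodeLabel.map constPart ^ (P.m + 1) = 0 := by
  ext a b
  by_contra hab
  have hb : (b.1 : ℕ) = a.1 + (P.m + 1) :=
    of_matrix_pow_apply_ne_zero (p := fun i c => (c.1 : ℕ) = a.1 + i)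
      (fun i c d hc hcd => by
        rw [layer_eq_of_nodeLabel_ne_none (nodeLabel_ne_none_of_constPart_ne_zero hcd), hc,
          add_assoc])
      rfl hab
  lia

variable (P) in
theorem constClosure_eq_one_add_mul :
    P.constClosure = 1 + P.nodeLabel.map constPart * P.constClosure := by
  have hgeom := mul_neg_geom_sum (P.nodeLabel.map constPart) (P.m + 1)
  rw [nodeLabel_constPart_pow_eq_zero, sub_zero, sub_mul, one_mul] at hgeom
  exact sub_eq_iff_eq_add.1 hgeom

theorem VarBefore.of_constClosure_ne_zero (hP : P.IsTrim) {y : Fin n} {a b : P.Node}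
    (hy : P.VarBefore y a.1 a.2) (hab : P.constClosure a b ≠ 0) : P.VarBefore y b.1 b.2 := by
  rw [constClosure, Matrix.sum_apply] at hab
  obtain ⟨k, -, hk⟩ := Finset.exists_ne_zero_of_sum_ne_zero hab
  refine of_matrix_pow_apply_ne_zero (p := fun _ c => P.VarBefore y c.1 c.2)
    (fun _ c d hc hcd => ?_) hy hk
  have hedge := nodeLabel_ne_none_of_constPart_ne_zero hcd
  have hd := hc.succ hP ((label_eq_nodeLabel hedge).trans_ne hedge)
  rwa [← layer_eq_of_nodeLabel_ne_none hedge] at hd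

theorem PathOrdered.varLabels_mul_constClosure_mul_varLabels {r : Fin n → Fin n → Prop}
    (hr : P.PathOrdered r) (hP : P.IsTrim) {x y : Fin n} (hyx : ¬r y x) :
    (varLabels P.nodeLabel y).map edgeVal * P.constClosure.map MvPolynomial.C *
      (varLabels P.nodeLabel x).map edgeVal = 0 := by
  ext1 a d
  rw [Matrix.mul_apply, Matrix.zero_apply]
  by_contra hsum
  obtain ⟨c, -, hc⟩ := Finset.exists_ne_zero_of_sum_ne_zero hsum
  have hac := left_ne_zero_of_mul hc
  rw [Matrix.mul_apply] at hac
  obtain ⟨b, -, hb⟩ := Finset.exists_ne_zero_of_sum_ne_zero hac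
  have hab : P.nodeLabel a b = some (Sum.inr y) :=
    eq_of_varLabels_map_edgeVal_ne_zero (left_ne_zero_of_mul hb)
  have hbc : P.constClosure b c ≠ 0 := fun h => right_ne_zero_of_mul hb (by simp [h])
  have hcd : P.nodeLabel c d = some (Sum.inr x) :=
    eq_of_varLabels_map_edgeVal_ne_zero (right_ne_zero_of_mul hc)
  have hab' : P.nodeLabel a b ≠ none := by simp [hab]
  have hcd' : P.nodeLabel c d ≠ none := by simp [hcd]
  have hyb := hP.varBefore_of_label_eq ((label_eq_nodeLabel hab').trans hab)
  rw [← layer_eq_of_nodeLabel_ne_none hab'] at hyb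
  have hyc := hyb.of_constClosure_ne_zero hP hbc
  have hcm : (c.1 : ℕ) < P.m := by
    have := layer_eq_of_nodeLabel_ne_none hcd'
    lia
  exact hyx (hyc.rel hP hr hcm ((label_eq_nodeLabel hcd').trans hcd))

theorem PathOrdered.eval_eq_labelProd_sweepLayers {r : Fin n → Fin n → Prop}
    [Std.Asymm r] (hr : P.PathOrdered r) (hP : P.IsTrim) {L : List (Fin n)}
    (hL : L.Pairwise r) (hmem : ∀ x, HasVar P.nodeLabel x → x ∈ L) :
    P.eval = labelProd (sweepLayers P.constClosure P.nodeLabel L)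
      (Sum.inl P.source) (Sum.inl P.sink) := by
  have hclosure : P.constClosure.map MvPolynomial.C =
      1 + (P.nodeLabel.map constPart).map MvPolynomial.C *
        P.constClosure.map (MvPolynomial.C (σ := Fin n)) := by
    refine (congrArg (MvPolynomial.C (σ := Fin n)).mapMatrix P.constClosure_eq_one_add_mul).trans ?_
    rw [map_add, map_one, map_mul]
    rfl
  have hnodup : L.Nodup := hL.nodup
  rw [labelProd_sweepLayers, Matrix.fromBlocks_apply₁₁]
  apply P.eval_eq_of_eq_one_add_mul
  rw [map_edgeVal_eq_add_sum_varLabels hnodup hmem]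
  exact prod_one_add_mul_eq_one_add_mul hclosure _
    (fun x _ => hr.varLabels_mul_constClosure_mul_varLabels hP (irrefl x))
    (hL.imp fun h => hr.varLabels_mul_constClosure_mul_varLabels hP (asymm h))

end PathSums

section Conversion

theorem card_hasVar_le {V : Type*} [Fintype V] (A : Matrix V V (Option (F ⊕ Fin n)))
    [DecidablePred (HasVar A)] :
    (Finset.univ.filter (HasVar A)).card ≤ Fintype.card V ^ 2 := by
  choose row col hentry using fun x : {x // HasVar A x} => x.2
  have hinj : Function.Injective fun x => (row x, col x) := by
    intro x y hxy
    obtain ⟨hrow, hcol⟩ := Prod.mk.inj hxy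
    have hlabel := (hentry x).symm.trans ((congrArg₂ A hrow hcol).trans (hentry y))
    exact Subtype.ext (Sum.inr_injective (Option.some_injective _ hlabel))
  rw [← Fintype.card_subtype, sq, ← Fintype.card_prod]
  exact Fintype.card_le_of_injective _ hinj

theorem four_mul_sq_add_one_mul_le_pow_six {N : ℕ} (hN : 2 ≤ N) :
    4 * (N ^ 2 + 1) * N ≤ N ^ 6 := by
  have hsq : 4 ≤ N ^ 2 := by nlinarith
  calc 4 * (N ^ 2 + 1) * N ≤ N ^ 2 * (N * N ^ 2) * N := by gcongr; nlinarith
    _ = N ^ 6 := by ring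

variable {r : Fin n → Fin n → Prop} [IsStrictTotalOrder (Fin n) r] [Field F]
  {P : ABP F n}

theorem PathOrdered.exists_isROABP_of_isTrim (hr : P.PathOrdered r) (hP : P.IsTrim)
    (hm : P.m ≠ 0) :
    ∃ Q : ABP F n, Q.IsROABP ∧ Q.OrderedBy r ∧ Q.eval = P.eval ∧ Q.size ≤ P.size ^ 6 := by
  classical
  obtain ⟨L, hL, hlength, hLvars⟩ :=
    exists_list_pairwise_toFinset_eq r (Finset.univ.filter (HasVar P.nodeLabel))
  have hmem (x : Fin n) (hx : HasVar P.nodeLabel x) : x ∈ L := by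
    simpa [← List.mem_toFinset, hLvars] using hx
  have hcard : L.length ≤ P.size ^ 2 := by
    rw [hlength, ← card_node]
    exact card_hasVar_le _
  let ℓ := sweepLayers P.constClosure P.nodeLabel L
  have hℓ : ℓ.length = 2 * L.length + 1 := length_sweepLayers _ _ L
  let Q := ofLayers ℓ (Sum.inl P.source) (Sum.inl P.sink)
  have hob : Q.Oblivious :=
    oblivious_ofLayers fun B hB x y hx hy => eq_of_hasVar_sweepLayers hB hx hy
  have hlt := rel_of_varInLayer_ofLayers (s := Sum.inl P.source) (t := Sum.inl P.sink)
    (pairwise_sweepLayers P.constClosure P.nodeLabel hL)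
  refine ⟨Q, hob.isROABP hlt, hob.orderedBy hlt, ?_, ?_⟩
  · rw [hr.eval_eq_labelProd_sweepLayers hP hL hmem]
    exact eval_ofLayers (hℓ.trans_ne (Nat.succ_ne_zero _))
  · calc Q.size ≤ (ℓ.length + 1) * Fintype.card (P.Node ⊕ P.Node) := size_ofLayers_le ℓ _ _
      _ = (2 * L.length + 1 + 1) * (P.size + P.size) := by rw [hℓ, Fintype.card_sum, card_node]
      _ ≤ (2 * P.size ^ 2 + 1 + 1) * (P.size + P.size) := by gcongr
      _ = 4 * (P.size ^ 2 + 1) * P.size := by ring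
      _ ≤ P.size ^ 6 := four_mul_sq_add_one_mul_le_pow_six (two_le_size hm)

theorem PathOrdered.exists_isROABP (hr : P.PathOrdered r) :
    ∃ Q : ABP F n, Q.IsROABP ∧ Q.OrderedBy r ∧ Q.eval = P.eval ∧ Q.size ≤ P.size ^ 6 := by
  by_cases hm : P.m = 0
  · have hvar (x : Fin n) (j : ℕ) : ¬P.VarInLayer x j := fun h => by simpa [hm] using h.1
    have hob : P.Oblivious := fun j x x' h => absurd h (hvar x j)
    have hlt (x x' : Fin n) (j j' : ℕ) (h : P.VarInLayer x j) (_ : P.VarInLayer x' j')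
        (_ : j < j') : r x x' := absurd h (hvar x j)
    exact ⟨P, hob.isROABP hlt, hob.orderedBy hlt, rfl, Nat.le_self_pow (by simp) _⟩
  · rw [← P.eval_trim]
    exact hr.trim.exists_isROABP_of_isTrim P.isTrim_trim hm

end Conversion

end ABP

namespace StrictIntervalABP

variable {F : Type} {n : ℕ} {P : StrictIntervalABP F n} {π : ℕ → ℕ} {i k : ℕ} {x : Fin n}

theorem mem_interval_source_of_label_eq (hπ : P.toABP.IsPath π) (hki : k < i) (hi : i ≤ P.m)
    (hx : P.label k (π k) (π (k + 1)) = some (Sum.inr x)) :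
    x ∈ Finset.Icc (P.lo 0 i 0 (π i)) (P.hi 0 i 0 (π i)) := by
  obtain ⟨hs, -, hwidth, hedge⟩ := hπ
  exact Finset.mem_Icc.2 <| P.mem_ival 0 i 0 (π i) x (Nat.zero_lt_of_lt hki) hi
    (P.w0.symm ▸ Nat.one_pos) (hwidth i hi)
    ⟨π, hs, rfl, fun j _ hj => hwidth j (hj.trans hi),
      fun j _ hj => hedge j (hj.trans_le hi), k, Nat.zero_le k, hki, hx⟩

theorem mem_interval_sink_of_label_eq (hπ : P.toABP.IsPath π) (hik : i ≤ k) (hk : k < P.m)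
    (hx : P.label k (π k) (π (k + 1)) = some (Sum.inr x)) :
    x ∈ Finset.Icc (P.lo i P.m (π i) 0) (P.hi i P.m (π i) 0) := by
  obtain ⟨-, ht, hwidth, hedge⟩ := hπ
  have hi : i < P.m := hik.trans_lt hk
  exact Finset.mem_Icc.2 <| P.mem_ival i P.m (π i) 0 x hi le_rfl (hwidth i hi.le)
    (P.wm.symm ▸ Nat.one_pos)
    ⟨π, rfl, ht, fun j _ hj => hwidth j hj, fun j _ hj => hedge j hj, k, hik, hk, hx⟩

theorem exists_node_separating_labels (hπ : P.toABP.IsPath π) {k' : ℕ} {x' : Fin n} (hkk' : k < k')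
    (hk' : k' < P.m) (hx : P.label k (π k) (π (k + 1)) = some (Sum.inr x))
    (hx' : P.label k' (π k') (π (k' + 1)) = some (Sum.inr x')) :
    ∃ i v, 0 < i ∧ i < P.m ∧ v < P.width i ∧ x ∈ Finset.Icc (P.lo 0 i 0 v) (P.hi 0 i 0 v) ∧
      x' ∈ Finset.Icc (P.lo i P.m v 0) (P.hi i P.m v 0) ∧ x ≠ x' := by
  have hk : k + 1 < P.m := lt_of_le_of_lt hkk' hk'
  have hv : π (k + 1) < P.width (k + 1) := hπ.2.2.1 (k + 1) hk.le
  have hmem := mem_interval_source_of_label_eq hπ k.lt_succ_self hk.le hx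
  have hmem' := mem_interval_sink_of_label_eq hπ hkk' hk' hx'
  have hdisj := P.disj 0 (k + 1) P.m 0 (π (k + 1)) 0 k.succ_pos hk le_rfl
    (P.w0.symm ▸ Nat.one_pos) hv (P.wm.symm ▸ Nat.one_pos)
  exact ⟨k + 1, π (k + 1), k.succ_pos, hk, hv, hmem, hmem', hdisj.forall_ne_finset hmem hmem'⟩

theorem pathOrdered_lt_of_ascending
    (hP : ∀ i v, 0 < i → i < P.m → v < P.width i → P.Ascending i v) :
    P.toABP.PathOrdered (· < ·) := by
  intro π hπ k k' x x' hkk' hk' hx hx'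
  obtain ⟨i, v, h₀, hi, hv, hmem, hmem', hne⟩ := exists_node_separating_labels hπ hkk' hk' hx hx'
  refine lt_of_le_of_ne ?_ hne
  calc x ≤ P.hi 0 i 0 v := (Finset.mem_Icc.1 hmem).2
    _ ≤ P.lo i P.m v 0 := hP i v h₀ hi hv
    _ ≤ x' := (Finset.mem_Icc.1 hmem').1

theorem pathOrdered_gt_of_descending
    (hP : ∀ i v, 0 < i → i < P.m → v < P.width i → P.Descending i v) :
    P.toABP.PathOrdered (· > ·) := by
  intro π hπ k k' x x' hkk' hk' hx hx'
  obtain ⟨i, v, h₀, hi, hv, hmem, hmem', hne⟩ := exists_node_separating_labels hπ hkk' hk' hx hx'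
  refine lt_of_le_of_ne ?_ hne.symm
  calc x' ≤ P.hi i P.m v 0 := (Finset.mem_Icc.1 hmem').2
    _ ≤ P.lo 0 i 0 v := hP i v h₀ hi hv
    _ ≤ x := (Finset.mem_Icc.1 hmem).1

end StrictIntervalABP

/-- there is a constant `c` such that for every strict-interval ABP `P`:
if all non-terminal nodes of `P` are ascending, then along every `s`-to-`t` path the
variable edge labels appear in strictly increasing order of index, and the polynomial
computed by `P` is computed by a ROABP of size polynomial in `size P` in which the
variables appear in the order `x_0, x_1, …, x_{n-1}`; symmetrically, if all non-terminal
nodes of `P` are descending, the variables along every `s`-to-`t` path appear in strictly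
decreasing order, and the polynomial computed by `P` is computed by a ROABP of size
polynomial in `size P` in which the variables appear in the order `x_{n-1}, …, x_1, x_0`. -/
theorem strictInterval_asc_desc_to_ROABP :
    ∃ c : ℕ, ∀ (F : Type) [inst : Field F] (n : ℕ) (P : StrictIntervalABP F n),
      ((∀ i v, 0 < i → i < P.m → v < P.width i → P.Ascending i v) →
        (∀ π : ℕ → ℕ, P.toABP.IsPath π → ∀ (k k' : ℕ) (x x' : Fin n), k < k' → k' < P.m →
          P.label k (π k) (π (k + 1)) = some (Sum.inr x) →
          P.label k' (π k') (π (k' + 1)) = some (Sum.inr x') → x < x') ∧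
        (∃ Q : ABP F n, Q.IsROABP ∧ Q.OrderedAsc ∧ Q.eval = P.toABP.eval ∧
          Q.size ≤ P.toABP.size ^ c)) ∧
      ((∀ i v, 0 < i → i < P.m → v < P.width i → P.Descending i v) →
        (∀ π : ℕ → ℕ, P.toABP.IsPath π → ∀ (k k' : ℕ) (x x' : Fin n), k < k' → k' < P.m →
          P.label k (π k) (π (k + 1)) = some (Sum.inr x) →
          P.label k' (π k') (π (k' + 1)) = some (Sum.inr x') → x' < x) ∧
        (∃ Q : ABP F n, Q.IsROABP ∧ Q.OrderedDesc ∧ Q.eval = P.toABP.eval ∧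
          Q.size ≤ P.toABP.size ^ c)) := by
  refine ⟨6, fun F _ n P => ⟨fun hasc => ?_, fun hdesc => ?_⟩⟩
  · have hP := P.pathOrdered_lt_of_ascending hasc
    exact ⟨hP, hP.exists_isROABP⟩
  · have hP := P.pathOrdered_gt_of_descending hdesc
    obtain ⟨Q, hQ, hord, heval, hsize⟩ := hP.exists_isROABP
    exact ⟨hP, Q, hQ, fun x x' j j' hx hx' hlt => hord x' x j' j hx' hx hlt, heval, hsize⟩
end

section
/- The polynomial x₁x₂ + x₂x₃ + x₁x₃ ∈ F[x₁, x₂, x₃] is computable by an interval formula, but it is not computable by any read-once formula. In particular, the class of polynomials computable by interval formulas is different from the class of polynomials computable by read-once formulas. -/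
/-- An arithmetic formula over `F` in variables `x_0, …, x_{n-1}`: a rooted binary tree
whose leaves are labeled by variables or constants and whose internal nodes are `+` or `×`. -/
inductive Formula (F : Type) (n : ℕ) where
  | const : F → Formula F n
  | var : Fin n → Formula F n
  | add : Formula F n → Formula F n → Formula F n
  | mul : Formula F n → Formula F n → Formula F n

namespace Formula

variable {F : Type} {n : ℕ}

/-- The polynomial computed by a formula. -/
noncomputable def eval [Field F] : Formula F n → MvPolynomial (Fin n) F
  | const c => MvPolynomial.C c
  | var i => MvPolynomial.X i
  | add f g => f.eval + g.eval
  | mul f g => f.eval * g.eval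

/-- Number of leaves of the formula labeled by the variable `x_i`. -/
def readCount : Formula F n → Fin n → ℕ
  | const _, _ => 0
  | var j, i => if j = i then 1 else 0
  | add f g, i => f.readCount i + g.readCount i
  | mul f g, i => f.readCount i + g.readCount i

/-- The size of a formula is its number of nodes. -/
def size : Formula F n → ℕ
  | const _ => 1
  | var _ => 1
  | add f g => f.size + g.size + 1
  | mul f g => f.size + g.size + 1

/-- The depth of a formula is the length of its longest root-to-leaf path. -/
def depth : Formula F n → ℕ
  | const _ => 0
  | var _ => 0
  | add f g => max f.depth g.depth + 1
  | mul f g => max f.depth g.depth + 1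

end Formula

/-- An interval formula: every gate computes a polynomial whose variables are contained in
an interval of consecutive variables, and for every product gate the intervals associated
with its two children are disjoint.  (Intervals are intervals `[a,b]` of indices; for a
child whose polynomial has no variables the associated interval may be empty.) -/
def IsIntervalFormula {F : Type} {n : ℕ} [Field F] : Formula F n → Prop
  | .const _ => True
  | .var _ => True
  | .add f g => IsIntervalFormula f ∧ IsIntervalFormula g
  | .mul f g => IsIntervalFormula f ∧ IsIntervalFormula g ∧
      ∃ a b c d : ℕ, Disjoint (Finset.Icc a b) (Finset.Icc c d) ∧
        (Formula.eval f).vars.image Fin.val ⊆ Finset.Icc a b ∧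
        (Formula.eval g).vars.image Fin.val ⊆ Finset.Icc c d

/-!
Let `p` be computed by a read-once formula and consider the leaves of three variables. Two of them,
say `xᵢ` and `xⱼ`, are joined by a gate `q` that does not read `xₖ`. By the chain rule, `∂ᵢp` and
`∂ⱼp` are `∂ᵢq` and `∂ⱼq` times a common factor, so the ratio `∂ⱼp / ∂ᵢp` does not depend on `xₖ`.
For `x₁x₂ + x₂x₃ + x₁x₃` the derivative of every such ratio with respect to the third variable is
nonzero, whereas `x₁x₂ + (x₁ + x₂)x₃` exhibits it as an interval formula.
-/

section PartialDerivatives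

open MvPolynomial

variable {R σ : Type*} [CommRing R] {i j k : σ}

lemma pderiv_pderiv_X (i j l : σ) : pderiv i (pderiv j (X l : MvPolynomial σ R)) = 0 := by
  classical
  rw [pderiv_X, Pi.single_apply]
  split_ifs <;> simp

lemma pderiv_comm (i j : σ) (p : MvPolynomial σ R) :
    pderiv i (pderiv j p) = pderiv j (pderiv i p) := by
  have lie_eq_zero : ⁅pderiv (R := R) i, pderiv (R := R) j⁆ = 0 :=
    derivation_ext fun l ↦ by simp [Derivation.commutator_apply, pderiv_pderiv_X]
  rw [← sub_eq_zero, ← Derivation.commutator_apply, lie_eq_zero, Derivation.zero_apply]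

/-- The Wronskian of `∂ᵢp` and `∂ⱼp` with respect to `xₖ`. It equals `(∂ᵢp)² · ∂ₖ(∂ⱼp / ∂ᵢp)`, so
it expresses without division whether `∂ₖ` annihilates the ratio of the two derivatives. -/
noncomputable def pderivWronskian (i j k : σ) (p : MvPolynomial σ R) : MvPolynomial σ R :=
  pderiv i p * pderiv k (pderiv j p) - pderiv j p * pderiv k (pderiv i p)

lemma pderivWronskian_eq_zero_of_pderiv_eq_zero {p : MvPolynomial σ R} (hk : pderiv k p = 0) :
    pderivWronskian i j k p = 0 := by
  simp [pderivWronskian, pderiv_comm k, hk]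

lemma pderivWronskian_X (i j k l : σ) : pderivWronskian i j k (X l : MvPolynomial σ R) = 0 := by
  simp [pderivWronskian, pderiv_pderiv_X]

lemma pderivWronskian_eq_sq_mul {p q u : MvPolynomial σ R}
    (hi : pderiv i q = u * pderiv i p) (hj : pderiv j q = u * pderiv j p) :
    pderivWronskian i j k q = u ^ 2 * pderivWronskian i j k p := by
  simp only [pderivWronskian, hi, hj, pderiv_mul]
  ring

lemma pderivWronskian_esymm_two (hij : i ≠ j) (hjk : j ≠ k) (hik : i ≠ k) :
    pderivWronskian i j k (X i * X j + X j * X k + X i * X k : MvPolynomial σ R) = X j - X i := by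
  simp [pderivWronskian, pderiv_X_of_ne, hij, hjk, hik, hij.symm, hjk.symm, hik.symm]

/-- For some pair among `xᵢ, xⱼ, xₖ`, the derivative in the third variable annihilates the ratio of
the derivatives of `p` in that pair. In a read-once formula this is the pair whose leaves meet
before they are joined with the third leaf. -/
def IsTripleResolved (i j k : σ) (p : MvPolynomial σ R) : Prop :=
  pderivWronskian i j k p = 0 ∨ pderivWronskian j k i p = 0 ∨ pderivWronskian k i j p = 0

namespace IsTripleResolved

variable {p q r u v : MvPolynomial σ R}

lemma rotate (hp : IsTripleResolved i j k p) : IsTripleResolved j k i p :=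
  Or.rotate hp

lemma of_pderiv_eq_mul_of_pair (hp : IsTripleResolved i j k p)
    (hu : ∀ l, pderiv l q = 0 → pderiv l r = u * pderiv l p)
    (hi : pderiv i q = 0) (hj : pderiv j q = 0) (hk : pderiv k p = 0 ∨ pderiv k q = 0) :
    IsTripleResolved i j k r := by
  have transfer {a b c : σ} (ha : pderiv a q = 0) (hb : pderiv b q = 0)
      (hW : pderivWronskian a b c p = 0) : pderivWronskian a b c r = 0 := by
    rw [pderivWronskian_eq_sq_mul (hu a ha) (hu b hb), hW, mul_zero]
  rcases hk with hkp | hkq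
  · exact .inl (transfer hi hj (pderivWronskian_eq_zero_of_pderiv_eq_zero hkp))
  · exact hp.imp (transfer hi hj) (.imp (transfer hj hkq) (transfer hkq hi))

-- Two of the three variables are absent from the same one of `p` and `q`.
lemma of_pderiv_eq_mul (hp : IsTripleResolved i j k p) (hq : IsTripleResolved i j k q)
    (hu : ∀ l, pderiv l q = 0 → pderiv l r = u * pderiv l p)
    (hv : ∀ l, pderiv l p = 0 → pderiv l r = v * pderiv l q)
    (hi : pderiv i p = 0 ∨ pderiv i q = 0) (hj : pderiv j p = 0 ∨ pderiv j q = 0)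
    (hk : pderiv k p = 0 ∨ pderiv k q = 0) : IsTripleResolved i j k r := by
  rcases hi with hip | hiq <;> rcases hj with hjp | hjq
  · exact hq.of_pderiv_eq_mul_of_pair hv hip hjp hk.symm
  · rcases hk with hkp | hkq
    · exact (hq.rotate.rotate.of_pderiv_eq_mul_of_pair hv hkp hip (.inl hjq)).rotate
    · exact (hp.rotate.of_pderiv_eq_mul_of_pair hu hjq hkq (.inl hip)).rotate.rotate
  · rcases hk with hkp | hkq
    · exact (hq.rotate.of_pderiv_eq_mul_of_pair hv hjp hkp (.inl hiq)).rotate.rotate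
    · exact (hp.rotate.rotate.of_pderiv_eq_mul_of_pair hu hkq hiq (.inl hjp)).rotate
  · exact hp.of_pderiv_eq_mul_of_pair hu hiq hjq hk

lemma add (hp : IsTripleResolved i j k p) (hq : IsTripleResolved i j k q)
    (hi : pderiv i p = 0 ∨ pderiv i q = 0) (hj : pderiv j p = 0 ∨ pderiv j q = 0)
    (hk : pderiv k p = 0 ∨ pderiv k q = 0) : IsTripleResolved i j k (p + q) :=
  hp.of_pderiv_eq_mul hq (u := 1) (v := 1) (fun l hl ↦ by simp [hl]) (fun l hl ↦ by simp [hl])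
    hi hj hk

lemma mul (hp : IsTripleResolved i j k p) (hq : IsTripleResolved i j k q)
    (hi : pderiv i p = 0 ∨ pderiv i q = 0) (hj : pderiv j p = 0 ∨ pderiv j q = 0)
    (hk : pderiv k p = 0 ∨ pderiv k q = 0) : IsTripleResolved i j k (p * q) :=
  hp.of_pderiv_eq_mul hq (u := q) (v := p) (fun l hl ↦ by simp [hl]) (fun l hl ↦ by simp [hl])
    hi hj hk

end IsTripleResolved

lemma not_isTripleResolved_esymm_two [Nontrivial R] (hij : i ≠ j) (hjk : j ≠ k) (hik : i ≠ k) :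
    ¬ IsTripleResolved i j k (X i * X j + X j * X k + X i * X k : MvPolynomial σ R) := by
  have wronskian_ne_zero {a b c : σ} (hab : a ≠ b) (hbc : b ≠ c) (hac : a ≠ c) :
      pderivWronskian a b c (X a * X b + X b * X c + X a * X c : MvPolynomial σ R) ≠ 0 := by
    rw [pderivWronskian_esymm_two hab hbc hac, sub_ne_zero]
    exact X_injective.ne hab.symm
  rintro (h | h | h)
  · exact wronskian_ne_zero hij hjk hik h
  · refine wronskian_ne_zero hjk hik.symm hij.symm ?_
    convert h using 2
    ring
  · refine wronskian_ne_zero hik.symm hij hjk.symm ?_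
    convert h using 2
    ring

end PartialDerivatives

namespace Formula

open MvPolynomial

variable {F : Type} [Field F] {n : ℕ} {i j k : Fin n}

lemma pderiv_eval_eq_zero_of_readCount_eq_zero {Φ : Formula F n} (h : Φ.readCount i = 0) :
    pderiv i Φ.eval = 0 := by
  induction Φ with
  | const c => exact pderiv_C
  | var j => exact pderiv_X_of_ne (by simpa [readCount] using h)
  | add Φ Ψ ihΦ ihΨ =>
    obtain ⟨hΦ, hΨ⟩ := Nat.add_eq_zero_iff.mp h
    simp [Formula.eval, ihΦ hΦ, ihΨ hΨ]
  | mul Φ Ψ ihΦ ihΨ =>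
    obtain ⟨hΦ, hΨ⟩ := Nat.add_eq_zero_iff.mp h
    simp [Formula.eval, ihΦ hΦ, ihΨ hΨ]

lemma pderiv_eval_eq_zero_or {Φ Ψ : Formula F n} (h : Φ.readCount i + Ψ.readCount i ≤ 1) :
    pderiv i Φ.eval = 0 ∨ pderiv i Ψ.eval = 0 :=
  have unread : Φ.readCount i = 0 ∨ Ψ.readCount i = 0 := by lia
  unread.imp pderiv_eval_eq_zero_of_readCount_eq_zero pderiv_eval_eq_zero_of_readCount_eq_zero

lemma isTripleResolved_eval {Φ : Formula F n} (hi : Φ.readCount i ≤ 1) (hj : Φ.readCount j ≤ 1)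
    (hk : Φ.readCount k ≤ 1) : IsTripleResolved i j k Φ.eval := by
  induction Φ with
  | const c => exact .inl (pderivWronskian_eq_zero_of_pderiv_eq_zero pderiv_C)
  | var l => exact .inl (pderivWronskian_X i j k l)
  | add Φ Ψ ihΦ ihΨ =>
    simp only [readCount] at hi hj hk
    exact (ihΦ (by lia) (by lia) (by lia)).add (ihΨ (by lia) (by lia) (by lia))
      (pderiv_eval_eq_zero_or hi) (pderiv_eval_eq_zero_or hj) (pderiv_eval_eq_zero_or hk)
  | mul Φ Ψ ihΦ ihΨ =>
    simp only [readCount] at hi hj hk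
    exact (ihΦ (by lia) (by lia) (by lia)).mul (ihΨ (by lia) (by lia) (by lia))
      (pderiv_eval_eq_zero_or hi) (pderiv_eval_eq_zero_or hj) (pderiv_eval_eq_zero_or hk)

end Formula

section IntervalFormula

open MvPolynomial

variable {F : Type} [Field F] {n : ℕ} {i j k : Fin n}

lemma image_val_vars_X_add_X_subset_Icc {R : Type*} [CommSemiring R] [Nontrivial R] (hij : i ≤ j) :
    (X i + X j : MvPolynomial (Fin n) R).vars.image Fin.val ⊆ Finset.Icc (i : ℕ) j := by
  refine (Finset.image_subset_image (vars_add_subset _ _)).trans ?_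
  simp only [Finset.image_union, vars_X, Finset.image_singleton]
  exact Finset.union_subset (by simpa using hij) (by simpa using hij)

lemma exists_isIntervalFormula_esymm_two (hij : i < j) (hjk : j < k) :
    ∃ Φ : Formula F n, IsIntervalFormula Φ ∧ Φ.eval = X i * X j + X j * X k + X i * X k := by
  refine ⟨.add (.mul (.var i) (.var j)) (.mul (.add (.var i) (.var j)) (.var k)),
    ⟨⟨trivial, trivial, i, i, j, j, ?_, ?_, ?_⟩,
      ⟨trivial, trivial⟩, trivial, i, j, k, k, ?_, ?_, ?_⟩, ?_⟩
  · simpa using Fin.val_ne_of_ne hij.ne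
  · simp [Formula.eval]
  · simp [Formula.eval]
  · simpa using fun _ ↦ hjk
  · exact image_val_vars_X_add_X_subset_Icc hij.le
  · simp [Formula.eval]
  · simp only [Formula.eval]
    ring

end IntervalFormula

open MvPolynomial in
theorem interval_formula_ne_ROF_general (F : Type) [Field F] {n : ℕ} {i j k : Fin n}
    (hij : i < j) (hjk : j < k) :
    (∃ Φ : Formula F n, IsIntervalFormula Φ ∧
        Φ.eval = X i * X j + X j * X k + X i * X k) ∧
    ¬ (∃ Φ : Formula F n, (Φ.readCount i ≤ 1 ∧ Φ.readCount j ≤ 1 ∧ Φ.readCount k ≤ 1) ∧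
        Φ.eval = X i * X j + X j * X k + X i * X k) := by
  refine ⟨exists_isIntervalFormula_esymm_two hij hjk, ?_⟩
  rintro ⟨Φ, ⟨hi, hj, hk⟩, hΦ⟩
  have resolved := Φ.isTripleResolved_eval hi hj hk
  rw [hΦ] at resolved
  exact not_isTripleResolved_esymm_two hij.ne hjk.ne (hij.trans hjk).ne resolved

open MvPolynomial in
/-- the polynomial `x₁x₂ + x₂x₃ + x₁x₃` (here `x₀x₁ + x₁x₂ + x₀x₂` with
`0`-indexed variables) is computable by an interval formula, but not by any read-once
formula; in particular interval formulas and ROFs compute different classes of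
polynomials. -/
theorem interval_formula_ne_ROF (F : Type) [Field F] :
    (∃ Φ : Formula F 3, IsIntervalFormula Φ ∧
        Φ.eval = X 0 * X 1 + X 1 * X 2 + X 0 * X 2) ∧
    ¬ (∃ Φ : Formula F 3, (∀ i, Φ.readCount i ≤ 1) ∧
        Φ.eval = X 0 * X 1 + X 1 * X 2 + X 0 * X 2) := by
  obtain ⟨interval, not_readOnce⟩ :=
    interval_formula_ne_ROF_general F (i := (0 : Fin 3)) (j := 1) (k := 2) (by decide) (by decide)
  exact ⟨interval, fun ⟨Φ, hΦ, hp⟩ ↦ not_readOnce ⟨Φ, ⟨hΦ 0, hΦ 1, hΦ 2⟩, hp⟩⟩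
end
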